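/- The ranknet (pairwise logistic) loss ℓ(α) = log(1 + exp(−α)) applied to score differences is not order-preserving under class-conditional label noise: there exist i.i.d. triples (X₁, Y₁, ε₁), (X₂, Y₂, ε₂) with {0,1}-valued labels, P(Y₁ = 1) ∈ (0,1), a noise level γ ∈ (1/2, 1], each εᵢ independent of (Xᵢ, Yᵢ) with P(εᵢ = 1) = γ defining Ỹᵢ = εᵢYᵢ + (1−εᵢ)(1−Yᵢ), and two measurable scorers f, g with all four pairwise risks finite, such that L̃(f) − L̃(g) ≠ (2γ−1)·(L(f) − L(g)), where L(h) = E[ℓ(h(X₁) − h(X₂)) | Y₁ = 1, Y₂ = 0] and L̃(h) = E[ℓ(h(X₁) − h(X₂)) | Ỹ₁ = 1, Ỹ₂ = 0]. -/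

import Mathlib

open MeasureTheory ProbabilityTheory

/-!
Let the feature be the clean label itself, `X = Y`, with `P(Y = 1) = 1/2`. Given `Ỹ = c`, the clean
label equals `c` with probability `γ`, so a scorer `h` with gap `d = h(1) - h(0)` has
`L(h) = ℓ(d)` and `L̃(h) = γ² ℓ(d) + 2γ(1 - γ) ℓ(0) + (1 - γ)² ℓ(-d)`. As `2γ - 1 = γ² - (1 - γ)²`,
the defect `L̃(f) - L̃(g) - (2γ - 1)(L(f) - L(g))` is `(1 - γ)²` times the difference between `f`
and `g` of the symmetrized loss `ℓ(d) + ℓ(-d)`. For the ranknet loss the symmetrization is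
`log(2 + 2 cosh d)`, which is not constant.
-/

/-- The observed label `Ỹ = εY + (1 - ε)(1 - Y)`: the clean label `y` is kept when `e = 1` and
flipped when `e = 0`. -/
def noisyLabel (y e : ℝ) : ℝ := e * y + (1 - e) * (1 - y)

/-- The pairwise risk `E[ℓ(h(X₁) - h(X₂)) | A]` of the scorer `h`, as the ratio
`E[ℓ(h(X₁) - h(X₂)) 1_A] / P(A)`; it is the clean risk `L(h)` for `A = {Y₁ = 1, Y₂ = 0}` and the
noisy risk `L̃(h)` for `A = {Ỹ₁ = 1, Ỹ₂ = 0}`. -/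
noncomputable def pairwiseRisk {Ω 𝒳 : Type*} [MeasurableSpace Ω] (P : Measure Ω) (ℓ : ℝ → ℝ)
    (h : 𝒳 → ℝ) (X₁ X₂ : Ω → 𝒳) (A : Set Ω) : ℝ :=
  (∫ ω in A, ℓ (h (X₁ ω) - h (X₂ ω)) ∂P) / (P A).toReal

/-- The pairwise logistic loss. -/
noncomputable def ranknetLoss (α : ℝ) : ℝ := Real.log (1 + Real.exp (-α))

theorem ranknetLoss_add_ranknetLoss_neg (t : ℝ) :
    ranknetLoss t + ranknetLoss (-t) = Real.log (2 + 2 * Real.cosh t) := by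
  rw [ranknetLoss, ranknetLoss, neg_neg, ← Real.log_mul (by positivity) (by positivity),
    Real.cosh_eq]
  congr 1
  have exp_neg_mul_exp : Real.exp (-t) * Real.exp t = 1 := by
    rw [← Real.exp_add, neg_add_cancel, Real.exp_zero]
  linear_combination exp_neg_mul_exp

theorem two_mul_ranknetLoss_zero_lt {t : ℝ} (ht : t ≠ 0) :
    2 * ranknetLoss 0 < ranknetLoss t + ranknetLoss (-t) := by
  calc 2 * ranknetLoss 0 = ranknetLoss 0 + ranknetLoss (-0) := by rw [neg_zero, two_mul]
    _ = Real.log (2 + 2 * Real.cosh 0) := ranknetLoss_add_ranknetLoss_neg 0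
    _ < Real.log (2 + 2 * Real.cosh t) := by
      rw [Real.cosh_zero]
      exact Real.log_lt_log (by norm_num) (by linarith [Real.one_lt_cosh.mpr ht])
    _ = ranknetLoss t + ranknetLoss (-t) := (ranknetLoss_add_ranknetLoss_neg t).symm

section Conditioning

variable {α β : Type*} [MeasurableSpace α] [MeasurableSpace β]

theorem integral_cond_eq_smul_setIntegral {E : Type*} [NormedAddCommGroup E] [NormedSpace ℝ E]
    (μ : Measure α) (s : Set α) (F : α → E) :
    ∫ x, F x ∂μ[|s] = (μ.real s)⁻¹ • ∫ x in s, F x ∂μ := by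
  rw [ProbabilityTheory.cond, integral_smul_measure, ENNReal.toReal_inv, measureReal_def]

theorem pairwiseRisk_eq_integral_cond {𝒳 : Type*} (P : Measure α) (ℓ : ℝ → ℝ) (h : 𝒳 → ℝ)
    (X₁ X₂ : α → 𝒳) (A : Set α) :
    pairwiseRisk P ℓ h X₁ X₂ A = ∫ ω, ℓ (h (X₁ ω) - h (X₂ ω)) ∂P[|A] := by
  rw [pairwiseRisk, integral_cond_eq_smul_setIntegral, smul_eq_mul, div_eq_inv_mul, measureReal_def]

theorem cond_prod (μ : Measure α) (ν : Measure β) [IsFiniteMeasure μ] [IsFiniteMeasure ν]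
    (s : Set α) (t : Set β) : (μ.prod ν)[|s ×ˢ t] = μ[|s].prod ν[|t] := by
  simp only [ProbabilityTheory.cond]
  rw [Measure.prod_smul_left, Measure.prod_smul_right, Measure.prod_restrict, smul_smul,
    Measure.prod_prod, ENNReal.mul_inv (.inr (measure_ne_top _ _)) (.inl (measure_ne_top _ _))]

theorem indepFun_comp_measurePreserving {γ δ : Type*} [MeasurableSpace γ] [MeasurableSpace δ]
    {μ : Measure α} {ν : Measure β} {T : α → β} (hT : MeasurePreserving T μ ν)
    {F : β → γ} {G : β → δ} (hF : Measurable F) (hG : Measurable G) (h : IndepFun F G ν) :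
    IndepFun (F ∘ T) (G ∘ T) μ := by
  rw [indepFun_iff_measure_inter_preimage_eq_mul] at h ⊢
  intro s t hs ht
  simpa only [Set.preimage_comp, ← Set.preimage_inter,
    hT.measure_preimage (hF hs).nullMeasurableSet, hT.measure_preimage (hG ht).nullMeasurableSet,
    hT.measure_preimage ((hF hs).inter (hG ht)).nullMeasurableSet] using h s t hs ht

theorem identDistrib_fst_snd (μ : Measure α) [IsProbabilityMeasure μ] :
    IdentDistrib Prod.fst Prod.snd (μ.prod μ) (μ.prod μ) where
  aemeasurable_fst := by fun_prop
  aemeasurable_snd := by fun_prop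
  map_eq := measurePreserving_fst.map_eq.trans measurePreserving_snd.map_eq.symm

end Conditioning

section Model

open unitInterval

/-- A Boolean as a `{0, 1}`-valued real, the form in which labels and noise bits enter the risks. -/
def bitValue (b : Bool) : ℝ := if b then 1 else 0

theorem bitValue_eq_zero_or_eq_one (b : Bool) : bitValue b = 0 ∨ bitValue b = 1 := by
  cases b <;> simp [bitValue]

theorem bitValue_injective : Function.Injective bitValue := by
  intro a b
  cases a <;> cases b <;> simp [bitValue]

theorem noisyLabel_bitValue (y e : Bool) :
    noisyLabel (bitValue y) (bitValue e) = bitValue (if e then y else !y) := by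
  cases y <;> cases e <;> simp [bitValue, noisyLabel]

/-- The law of a sample `(Y, ε)`: independent bits with `P(Y = 1) = 1/2` and `P(ε = 1) = γ`. The
feature is the label itself, `X = Y`, and needs no coordinate of its own. -/
noncomputable def sampleLaw (γ : I) : Measure (Bool × Bool) :=
  Ber(true, false, ⟨1 / 2, by norm_num, by norm_num⟩).prod Ber(true, false, γ)

instance (γ : I) : IsProbabilityMeasure (sampleLaw γ) := by
  unfold sampleLaw
  infer_instance

/-- The law of two independent samples `((Y₁, ε₁), (Y₂, ε₂))`. -/
noncomputable def pairLaw (γ : I) : Measure ((Bool × Bool) × (Bool × Bool)) :=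
  (sampleLaw γ).prod (sampleLaw γ)

instance (γ : I) : IsProbabilityMeasure (pairLaw γ) := by
  unfold pairLaw
  infer_instance

/-- The triple `(X, Y, ε)` of a sample `(Y, ε)`, with `X = Y`. -/
def sampleTriple (z : Bool × Bool) : ℝ × ℝ × ℝ := (bitValue z.1, bitValue z.1, bitValue z.2)

/-- The clean risk `L(h)` in the model `X = Y`. -/
noncomputable def cleanRisk (γ : I) (ℓ h : ℝ → ℝ) : ℝ :=
  pairwiseRisk (pairLaw γ) ℓ h (fun ω => bitValue ω.1.1) (fun ω => bitValue ω.2.1)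
    {ω | bitValue ω.1.1 = 1 ∧ bitValue ω.2.1 = 0}

/-- The noisy risk `L̃(h)` in the model `X = Y`. -/
noncomputable def noisyRisk (γ : I) (ℓ h : ℝ → ℝ) : ℝ :=
  pairwiseRisk (pairLaw γ) ℓ h (fun ω => bitValue ω.1.1) (fun ω => bitValue ω.2.1)
    {ω | noisyLabel (bitValue ω.1.1) (bitValue ω.1.2) = 1 ∧
      noisyLabel (bitValue ω.2.1) (bitValue ω.2.2) = 0}

theorem bernoulliMeasure_singleton_true (p : I) :
    Ber(true, false, p) {true} = ENNReal.ofReal p := by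
  rw [bernoulliMeasure_apply_of_mem_of_notMem p .of_discrete (Set.mem_singleton true) (by simp),
    ENNReal.ofReal_eq_coe_nnreal p.2.1]
  rfl

variable (γ : I)

theorem sampleLaw_label : sampleLaw γ {z | bitValue z.1 = 1} = ENNReal.ofReal (1 / 2) := by
  have label_event : {z : Bool × Bool | bitValue z.1 = 1} = {true} ×ˢ Set.univ := by
    ext ⟨y, e⟩
    cases y <;> simp [bitValue]
  rw [label_event, sampleLaw, Measure.prod_prod, measure_univ, mul_one,
    bernoulliMeasure_singleton_true]

theorem sampleLaw_noise : sampleLaw γ {z | bitValue z.2 = 1} = ENNReal.ofReal γ := by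
  have noise_event : {z : Bool × Bool | bitValue z.2 = 1} = Set.univ ×ˢ {true} := by
    ext ⟨y, e⟩
    cases e <;> simp [bitValue]
  rw [noise_event, sampleLaw, Measure.prod_prod, measure_univ, one_mul,
    bernoulliMeasure_singleton_true]

theorem measurePreserving_fst_pairLaw :
    MeasurePreserving Prod.fst (pairLaw γ) (sampleLaw γ) :=
  measurePreserving_fst

theorem measurePreserving_snd_pairLaw :
    MeasurePreserving Prod.snd (pairLaw γ) (sampleLaw γ) :=
  measurePreserving_snd

theorem pairLaw_label_fst : pairLaw γ {ω | bitValue ω.1.1 = 1} = ENNReal.ofReal (1 / 2) :=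
  ((measurePreserving_fst_pairLaw γ).measure_preimage
    MeasurableSet.of_discrete.nullMeasurableSet).trans (sampleLaw_label γ)

theorem pairLaw_noise_fst : pairLaw γ {ω | bitValue ω.1.2 = 1} = ENNReal.ofReal γ :=
  ((measurePreserving_fst_pairLaw γ).measure_preimage
    MeasurableSet.of_discrete.nullMeasurableSet).trans (sampleLaw_noise γ)

theorem pairLaw_noise_snd : pairLaw γ {ω | bitValue ω.2.2 = 1} = ENNReal.ofReal γ :=
  ((measurePreserving_snd_pairLaw γ).measure_preimage
    MeasurableSet.of_discrete.nullMeasurableSet).trans (sampleLaw_noise γ)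

theorem indepFun_sampleLaw_label_noise :
    IndepFun (fun z : Bool × Bool => (bitValue z.1, bitValue z.1)) (fun z => bitValue z.2)
      (sampleLaw γ) :=
  indepFun_prod (X := fun y => (bitValue y, bitValue y)) (Y := bitValue) .of_discrete .of_discrete

theorem setIntegral_sampleLaw (s : Set (Bool × Bool)) (F : Bool × Bool → ℝ) :
    ∫ z in s, F z ∂sampleLaw γ =
      1 / 2 * (γ * s.indicator F (true, true) + (1 - γ) * s.indicator F (true, false)) +
      1 / 2 * (γ * s.indicator F (false, true) + (1 - γ) * s.indicator F (false, false)) := by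
  rw [← integral_indicator .of_discrete, sampleLaw, integral_prod _ .of_finite]
  simp only [integral_bernoulliMeasure, smul_eq_mul]
  ring

theorem setIntegral_label (c : Bool) (F : Bool → ℝ) :
    ∫ z in {z | bitValue z.1 = bitValue c}, F z.1 ∂sampleLaw γ = 1 / 2 * F c := by
  rw [setIntegral_sampleLaw]
  cases c <;>
    simp only [Set.indicator, Set.mem_ofPred_eq, bitValue_injective.eq_iff, reduceCtorEq,
      if_true, if_false] <;>
    ring

theorem setIntegral_noisyLabel (c : Bool) (F : Bool → ℝ) :
    ∫ z in {z | noisyLabel (bitValue z.1) (bitValue z.2) = bitValue c}, F z.1 ∂sampleLaw γ =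
      1 / 2 * (γ * F c + (1 - γ) * F (!c)) := by
  rw [setIntegral_sampleLaw]
  cases c <;>
    simp only [Set.indicator, Set.mem_ofPred_eq, noisyLabel_bitValue, bitValue_injective.eq_iff,
      Bool.not_true, Bool.not_false, Bool.false_eq_true, reduceCtorEq, if_true, if_false] <;>
    ring

theorem integral_cond_label (c : Bool) (F : Bool → ℝ) :
    ∫ z, F z.1 ∂(sampleLaw γ)[|{z | bitValue z.1 = bitValue c}] = F c := by
  have event_prob : (sampleLaw γ).real {z | bitValue z.1 = bitValue c} = 1 / 2 := by
    rw [← setIntegral_one_eq_measureReal, setIntegral_label γ c fun _ => 1, mul_one]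
  rw [integral_cond_eq_smul_setIntegral, event_prob, setIntegral_label, smul_eq_mul]
  ring

theorem integral_cond_noisyLabel (c : Bool) (F : Bool → ℝ) :
    ∫ z, F z.1 ∂(sampleLaw γ)[|{z | noisyLabel (bitValue z.1) (bitValue z.2) = bitValue c}] =
      γ * F c + (1 - γ) * F (!c) := by
  have event_prob :
      (sampleLaw γ).real {z | noisyLabel (bitValue z.1) (bitValue z.2) = bitValue c} = 1 / 2 := by
    rw [← setIntegral_one_eq_measureReal, setIntegral_noisyLabel γ c fun _ => 1]
    ring
  rw [integral_cond_eq_smul_setIntegral, event_prob, setIntegral_noisyLabel, smul_eq_mul]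
  ring

theorem pairwiseRisk_pairLaw_prod (ℓ h : ℝ → ℝ) (s t : Set (Bool × Bool)) :
    pairwiseRisk (pairLaw γ) ℓ h (fun ω => bitValue ω.1.1) (fun ω => bitValue ω.2.1) (s ×ˢ t) =
      ∫ z, ∫ w, ℓ (h (bitValue z.1) - h (bitValue w.1)) ∂(sampleLaw γ)[|t] ∂(sampleLaw γ)[|s] := by
  rw [pairwiseRisk_eq_integral_cond, pairLaw, cond_prod, integral_prod _ .of_finite]

theorem cleanRisk_eq (ℓ h : ℝ → ℝ) : cleanRisk γ ℓ h = ℓ (h 1 - h 0) := by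
  have inner (x : ℝ) :
      ∫ w, ℓ (h x - h (bitValue w.1)) ∂(sampleLaw γ)[|{z | bitValue z.1 = bitValue false}] =
        ℓ (h x - h 0) :=
    integral_cond_label γ false fun y => ℓ (h x - h (bitValue y))
  calc cleanRisk γ ℓ h
    _ = ∫ z, ∫ w, ℓ (h (bitValue z.1) - h (bitValue w.1))
          ∂(sampleLaw γ)[|{z | bitValue z.1 = bitValue false}]
          ∂(sampleLaw γ)[|{z | bitValue z.1 = bitValue true}] :=
      pairwiseRisk_pairLaw_prod γ ℓ h {z | bitValue z.1 = bitValue true}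
        {z | bitValue z.1 = bitValue false}
    _ = ∫ z, ℓ (h (bitValue z.1) - h 0)
          ∂(sampleLaw γ)[|{z | bitValue z.1 = bitValue true}] := by simp only [inner]
    _ = ℓ (h 1 - h 0) := integral_cond_label γ true fun y => ℓ (h (bitValue y) - h 0)

theorem noisyRisk_eq (ℓ h : ℝ → ℝ) :
    noisyRisk γ ℓ h =
      γ ^ 2 * ℓ (h 1 - h 0) + 2 * γ * (1 - γ) * ℓ 0 + (1 - γ) ^ 2 * ℓ (h 0 - h 1) := by
  have inner (x : ℝ) :
      ∫ w, ℓ (h x - h (bitValue w.1))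
          ∂(sampleLaw γ)[|{z | noisyLabel (bitValue z.1) (bitValue z.2) = bitValue false}] =
        γ * ℓ (h x - h 0) + (1 - γ) * ℓ (h x - h 1) :=
    integral_cond_noisyLabel γ false fun y => ℓ (h x - h (bitValue y))
  calc noisyRisk γ ℓ h
    _ = ∫ z, ∫ w, ℓ (h (bitValue z.1) - h (bitValue w.1))
          ∂(sampleLaw γ)[|{z | noisyLabel (bitValue z.1) (bitValue z.2) = bitValue false}]
          ∂(sampleLaw γ)[|{z | noisyLabel (bitValue z.1) (bitValue z.2) = bitValue true}] :=
      pairwiseRisk_pairLaw_prod γ ℓ h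
        {z | noisyLabel (bitValue z.1) (bitValue z.2) = bitValue true}
        {z | noisyLabel (bitValue z.1) (bitValue z.2) = bitValue false}
    _ = ∫ z, γ * ℓ (h (bitValue z.1) - h 0) + (1 - γ) * ℓ (h (bitValue z.1) - h 1)
          ∂(sampleLaw γ)[|{z | noisyLabel (bitValue z.1) (bitValue z.2) = bitValue true}] := by
      simp only [inner]
    _ = γ * (γ * ℓ (h 1 - h 0) + (1 - γ) * ℓ (h 1 - h 1)) +
          (1 - γ) * (γ * ℓ (h 0 - h 0) + (1 - γ) * ℓ (h 0 - h 1)) :=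
      integral_cond_noisyLabel γ true fun y =>
        γ * ℓ (h (bitValue y) - h 0) + (1 - γ) * ℓ (h (bitValue y) - h 1)
    _ = γ ^ 2 * ℓ (h 1 - h 0) + 2 * γ * (1 - γ) * ℓ 0 + (1 - γ) ^ 2 * ℓ (h 0 - h 1) := by
      simp only [sub_self]
      ring

theorem noisyRisk_sub_sub_mul_cleanRisk_sub (ℓ f g : ℝ → ℝ) :
    noisyRisk γ ℓ f - noisyRisk γ ℓ g - (2 * γ - 1) * (cleanRisk γ ℓ f - cleanRisk γ ℓ g) =
      (1 - γ) ^ 2 * (ℓ (f 1 - f 0) + ℓ (f 0 - f 1) - (ℓ (g 1 - g 0) + ℓ (g 0 - g 1))) := by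
  simp only [cleanRisk_eq, noisyRisk_eq]
  ring

theorem noisyRisk_sub_ne_mul_cleanRisk_sub {ℓ : ℝ → ℝ} {t : ℝ} (hℓ : ℓ t + ℓ (-t) ≠ 2 * ℓ 0)
    (hγ : (γ : ℝ) ≠ 1) :
    noisyRisk γ ℓ (t * ·) - noisyRisk γ ℓ 0 ≠
      (2 * γ - 1) * (cleanRisk γ ℓ (t * ·) - cleanRisk γ ℓ 0) := by
  rw [← sub_ne_zero, noisyRisk_sub_sub_mul_cleanRisk_sub]
  refine mul_ne_zero (pow_ne_zero 2 (sub_ne_zero.mpr hγ.symm)) ?_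
  simpa [two_mul, sub_eq_zero] using hℓ

end Model

theorem ranknet_loss_not_order_preserving_general {ℓ : ℝ → ℝ} {t : ℝ}
    (hℓ : ℓ t + ℓ (-t) ≠ 2 * ℓ 0) {γ : ℝ} (hγ : γ ∈ Set.Ico 0 1) :
    ∃ (Ω : Type) (_ : MeasurableSpace Ω) (P : Measure Ω) (𝒳 : Type)
      (_ : MeasurableSpace 𝒳) (X₁ X₂ : Ω → 𝒳) (Y₁ Y₂ e₁ e₂ : Ω → ℝ) (f g : 𝒳 → ℝ),
      IsProbabilityMeasure P ∧
      Measurable X₁ ∧ Measurable X₂ ∧ Measurable Y₁ ∧ Measurable Y₂ ∧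
      Measurable e₁ ∧ Measurable e₂ ∧ Measurable f ∧ Measurable g ∧
      (∀ ω, Y₁ ω = 0 ∨ Y₁ ω = 1) ∧ (∀ ω, Y₂ ω = 0 ∨ Y₂ ω = 1) ∧
      (∀ ω, e₁ ω = 0 ∨ e₁ ω = 1) ∧ (∀ ω, e₂ ω = 0 ∨ e₂ ω = 1) ∧
      IndepFun (fun ω => (X₁ ω, Y₁ ω, e₁ ω)) (fun ω => (X₂ ω, Y₂ ω, e₂ ω)) P ∧
      IdentDistrib (fun ω => (X₁ ω, Y₁ ω, e₁ ω)) (fun ω => (X₂ ω, Y₂ ω, e₂ ω)) P P ∧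
      0 < P {ω | Y₁ ω = 1} ∧ P {ω | Y₁ ω = 1} < 1 ∧
      IndepFun (fun ω => (X₁ ω, Y₁ ω)) e₁ P ∧
      IndepFun (fun ω => (X₂ ω, Y₂ ω)) e₂ P ∧
      P {ω | e₁ ω = 1} = ENNReal.ofReal γ ∧
      P {ω | e₂ ω = 1} = ENNReal.ofReal γ ∧
      let clean := {ω | Y₁ ω = 1 ∧ Y₂ ω = 0}
      let noisy := {ω | noisyLabel (Y₁ ω) (e₁ ω) = 1 ∧ noisyLabel (Y₂ ω) (e₂ ω) = 0}
      IntegrableOn (fun ω => ℓ (f (X₁ ω) - f (X₂ ω))) clean P ∧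
      IntegrableOn (fun ω => ℓ (g (X₁ ω) - g (X₂ ω))) clean P ∧
      IntegrableOn (fun ω => ℓ (f (X₁ ω) - f (X₂ ω))) noisy P ∧
      IntegrableOn (fun ω => ℓ (g (X₁ ω) - g (X₂ ω))) noisy P ∧
      pairwiseRisk P ℓ f X₁ X₂ noisy - pairwiseRisk P ℓ g X₁ X₂ noisy ≠
        (2 * γ - 1) * (pairwiseRisk P ℓ f X₁ X₂ clean - pairwiseRisk P ℓ g X₁ X₂ clean) := by
  lift γ to unitInterval using ⟨hγ.1, hγ.2.le⟩
  refine ⟨(Bool × Bool) × (Bool × Bool), inferInstance, pairLaw γ, ℝ, inferInstance,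
    fun ω => bitValue ω.1.1, fun ω => bitValue ω.2.1,
    fun ω => bitValue ω.1.1, fun ω => bitValue ω.2.1,
    fun ω => bitValue ω.1.2, fun ω => bitValue ω.2.2, (t * ·), 0,
    inferInstance, .of_discrete, .of_discrete, .of_discrete, .of_discrete, .of_discrete,
    .of_discrete, by fun_prop, by fun_prop,
    fun _ => bitValue_eq_zero_or_eq_one _, fun _ => bitValue_eq_zero_or_eq_one _,
    fun _ => bitValue_eq_zero_or_eq_one _, fun _ => bitValue_eq_zero_or_eq_one _,
    ?iid_indep, ?iid_distrib, by simp [pairLaw_label_fst], by simp [pairLaw_label_fst],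
    ?noise_indep₁, ?noise_indep₂, pairLaw_noise_fst γ, pairLaw_noise_snd γ,
    Integrable.of_finite, Integrable.of_finite, Integrable.of_finite, Integrable.of_finite,
    noisyRisk_sub_ne_mul_cleanRisk_sub γ hℓ hγ.2.ne⟩
  case iid_indep =>
    exact indepFun_prod (X := sampleTriple) (Y := sampleTriple) .of_discrete .of_discrete
  case iid_distrib =>
    exact (identDistrib_fst_snd (sampleLaw γ)).comp (u := sampleTriple) .of_discrete
  case noise_indep₁ =>
    exact indepFun_comp_measurePreserving (measurePreserving_fst_pairLaw γ)
      .of_discrete .of_discrete (indepFun_sampleLaw_label_noise γ)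
  case noise_indep₂ =>
    exact indepFun_comp_measurePreserving (measurePreserving_snd_pairLaw γ)
      .of_discrete .of_discrete (indepFun_sampleLaw_label_noise γ)

/-- The ranknet (pairwise logistic) loss `ℓ(α) = log(1 + exp(-α))`
applied to score differences is not order-preserving under class-conditional label
noise: there exist i.i.d. triples `(X₁,Y₁,ε₁)`, `(X₂,Y₂,ε₂)` with `{0,1}`-valued
labels, `P(Y₁=1) ∈ (0,1)`, `γ ∈ (1/2, 1]`, `εᵢ ⟂ (Xᵢ,Yᵢ)`, `P(εᵢ=1) = γ`
(defining `Ỹᵢ = εᵢYᵢ + (1-εᵢ)(1-Yᵢ)`), and scorers `f, g` with all four pairwise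
risks finite, such that `L̃(f) - L̃(g) ≠ (2γ-1)(L(f) - L(g))`, where
`L(h) = E[ℓ(h(X₁)-h(X₂)) | Y₁=1, Y₂=0]` and `L̃(h) = E[ℓ(h(X₁)-h(X₂)) | Ỹ₁=1, Ỹ₂=0]`. -/
theorem ranknet_loss_not_order_preserving :
    ∃ (Ω : Type) (_ : MeasurableSpace Ω) (P : Measure Ω) (𝒳 : Type)
      (_ : MeasurableSpace 𝒳) (X₁ X₂ : Ω → 𝒳) (Y₁ Y₂ e₁ e₂ : Ω → ℝ) (γ : ℝ)
      (f g : 𝒳 → ℝ),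
      IsProbabilityMeasure P ∧
      Measurable X₁ ∧ Measurable X₂ ∧ Measurable Y₁ ∧ Measurable Y₂ ∧
      Measurable e₁ ∧ Measurable e₂ ∧ Measurable f ∧ Measurable g ∧
      (∀ ω, Y₁ ω = 0 ∨ Y₁ ω = 1) ∧ (∀ ω, Y₂ ω = 0 ∨ Y₂ ω = 1) ∧
      (∀ ω, e₁ ω = 0 ∨ e₁ ω = 1) ∧ (∀ ω, e₂ ω = 0 ∨ e₂ ω = 1) ∧
      IndepFun (fun ω => (X₁ ω, Y₁ ω, e₁ ω)) (fun ω => (X₂ ω, Y₂ ω, e₂ ω)) P ∧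
      IdentDistrib (fun ω => (X₁ ω, Y₁ ω, e₁ ω)) (fun ω => (X₂ ω, Y₂ ω, e₂ ω)) P P ∧
      0 < P {ω | Y₁ ω = 1} ∧ P {ω | Y₁ ω = 1} < 1 ∧
      γ ∈ Set.Ioc (1 / 2 : ℝ) 1 ∧
      IndepFun (fun ω => (X₁ ω, Y₁ ω)) e₁ P ∧
      IndepFun (fun ω => (X₂ ω, Y₂ ω)) e₂ P ∧
      P {ω | e₁ ω = 1} = ENNReal.ofReal γ ∧
      P {ω | e₂ ω = 1} = ENNReal.ofReal γ ∧
      IntegrableOn (fun ω => Real.log (1 + Real.exp (-(f (X₁ ω) - f (X₂ ω)))))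
        {ω | Y₁ ω = 1 ∧ Y₂ ω = 0} P ∧
      IntegrableOn (fun ω => Real.log (1 + Real.exp (-(g (X₁ ω) - g (X₂ ω)))))
        {ω | Y₁ ω = 1 ∧ Y₂ ω = 0} P ∧
      IntegrableOn (fun ω => Real.log (1 + Real.exp (-(f (X₁ ω) - f (X₂ ω)))))
        {ω | e₁ ω * Y₁ ω + (1 - e₁ ω) * (1 - Y₁ ω) = 1
            ∧ e₂ ω * Y₂ ω + (1 - e₂ ω) * (1 - Y₂ ω) = 0} P ∧
      IntegrableOn (fun ω => Real.log (1 + Real.exp (-(g (X₁ ω) - g (X₂ ω)))))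
        {ω | e₁ ω * Y₁ ω + (1 - e₁ ω) * (1 - Y₁ ω) = 1
            ∧ e₂ ω * Y₂ ω + (1 - e₂ ω) * (1 - Y₂ ω) = 0} P ∧
      (∫ ω in {ω | e₁ ω * Y₁ ω + (1 - e₁ ω) * (1 - Y₁ ω) = 1
                  ∧ e₂ ω * Y₂ ω + (1 - e₂ ω) * (1 - Y₂ ω) = 0},
          Real.log (1 + Real.exp (-(f (X₁ ω) - f (X₂ ω)))) ∂P)
        / (P {ω | e₁ ω * Y₁ ω + (1 - e₁ ω) * (1 - Y₁ ω) = 1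
                  ∧ e₂ ω * Y₂ ω + (1 - e₂ ω) * (1 - Y₂ ω) = 0}).toReal
      - (∫ ω in {ω | e₁ ω * Y₁ ω + (1 - e₁ ω) * (1 - Y₁ ω) = 1
                  ∧ e₂ ω * Y₂ ω + (1 - e₂ ω) * (1 - Y₂ ω) = 0},
          Real.log (1 + Real.exp (-(g (X₁ ω) - g (X₂ ω)))) ∂P)
        / (P {ω | e₁ ω * Y₁ ω + (1 - e₁ ω) * (1 - Y₁ ω) = 1
                  ∧ e₂ ω * Y₂ ω + (1 - e₂ ω) * (1 - Y₂ ω) = 0}).toReal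
      ≠ (2 * γ - 1)
        * ((∫ ω in {ω | Y₁ ω = 1 ∧ Y₂ ω = 0},
              Real.log (1 + Real.exp (-(f (X₁ ω) - f (X₂ ω)))) ∂P)
              / (P {ω | Y₁ ω = 1 ∧ Y₂ ω = 0}).toReal
            - (∫ ω in {ω | Y₁ ω = 1 ∧ Y₂ ω = 0},
                Real.log (1 + Real.exp (-(g (X₁ ω) - g (X₂ ω)))) ∂P)
              / (P {ω | Y₁ ω = 1 ∧ Y₂ ω = 0}).toReal) := by
  obtain ⟨Ω, mΩ, P, 𝒳, m𝒳, X₁, X₂, Y₁, Y₂, e₁, e₂, f, g, h⟩ :=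
    ranknet_loss_not_order_preserving_general (γ := 3 / 4)
      (two_mul_ranknetLoss_zero_lt one_ne_zero).ne' ⟨by norm_num, by norm_num⟩
  have level_mem : (3 / 4 : ℝ) ∈ Set.Ioc (1 / 2) 1 := ⟨by norm_num, by norm_num⟩
  exact ⟨Ω, mΩ, P, 𝒳, m𝒳, X₁, X₂, Y₁, Y₂, e₁, e₂, 3 / 4, f, g, by
    simpa only [level_mem, true_and, noisyLabel, pairwiseRisk, ranknetLoss] using h⟩
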